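/- (Table 1 entry: 2-WL and local 2-FWL are incomparable in link discriminating power.) (i) There exist unlabeled graphs G, G' and target links (p,q) in G and (p',q') in G' that are 2-FWL_L-indistinguishable but not 2-WL-indistinguishable. (ii) There exist unlabeled graphs H, H' and target links (r,s) in H and (r',s') in H' that are 2-WL-indistinguishable but not 2-FWL_L-indistinguishable. Hence neither of 2-WL and 2-FWL_L has equal or stronger link discriminating power than the other. -/

import Mathlib

open scoped Classical

universe u v

/-- The common 1-WL color type over label set `σ`:
`C 0 = σ`, `C (t+1) = C t × Multiset (C t)`. -/
def WL1Color (σ : Type u) : ℕ → Type u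
  | 0 => σ
  | t + 1 => WL1Color σ t × Multiset (WL1Color σ t)

/-- The 1-WL coloring of a labeled graph `(G, l)`:
`c¹⁰(v) = l v`, `c¹ᵗ⁺¹(v) = (c¹ᵗ(v), {{c¹ᵗ(u) : u ∈ N(v)}})`. -/
noncomputable def wl1 {σ : Type u} {V : Type v} [Fintype V] (G : SimpleGraph V)
    (l : V → σ) : (t : ℕ) → V → WL1Color σ t
  | 0 => l
  | t + 1 => fun v => (wl1 G l t v, (G.neighborFinset v).val.map (wl1 G l t))

/-- The type of initial pair colors over label set `σ`. -/
def PairColor0 (σ : Type u) : Type u := σ × σ × Bool × Bool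

/-- Initial pair color `c⁰(p,q) = (l p, l q, 1_{(p,q)∈E}, 1_{p=q})`. -/
noncomputable def pairInit {σ : Type u} {V : Type v} (G : SimpleGraph V) (l : V → σ)
    (e : V × V) : PairColor0 σ :=
  (l e.1, l e.2, decide (G.Adj e.1 e.2), decide (e.1 = e.2))

/-- The common (plain/local) 2-WL pair color type over label set `σ`. -/
def WL2Color (σ : Type u) : ℕ → Type u
  | 0 => PairColor0 σ
  | t + 1 => WL2Color σ t × Multiset (WL2Color σ t) × Multiset (WL2Color σ t)

/-- The plain 2-WL coloring:
`c₂ᵗ⁺¹(p,q) = (c₂ᵗ(p,q), {{c₂ᵗ(u,q) : u ∈ V}}, {{c₂ᵗ(p,v) : v ∈ V}})`. -/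
noncomputable def wl2 {σ : Type u} {V : Type v} [Fintype V] (G : SimpleGraph V)
    (l : V → σ) : (t : ℕ) → V × V → WL2Color σ t
  | 0 => pairInit G l
  | t + 1 => fun e =>
      (wl2 G l t e,
        Finset.univ.val.map (fun u => wl2 G l t (u, e.2)),
        Finset.univ.val.map (fun v => wl2 G l t (e.1, v)))

/-- The local 2-WL (2-WL_L) coloring:
`cₗᵗ⁺¹(p,q) = (cₗᵗ(p,q), {{cₗᵗ(u,q) : (u,q) ∈ E}}, {{cₗᵗ(p,v) : (p,v) ∈ E}})`. -/
noncomputable def wl2L {σ : Type u} {V : Type v} [Fintype V] (G : SimpleGraph V)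
    (l : V → σ) : (t : ℕ) → V × V → WL2Color σ t
  | 0 => pairInit G l
  | t + 1 => fun e =>
      (wl2L G l t e,
        (Finset.univ.filter (fun u => G.Adj u e.2)).val.map (fun u => wl2L G l t (u, e.2)),
        (Finset.univ.filter (fun v => G.Adj e.1 v)).val.map (fun v => wl2L G l t (e.1, v)))

/-- The common (plain/local) 2-FWL pair color type over label set `σ`. -/
def FWLColor (σ : Type u) : ℕ → Type u
  | 0 => PairColor0 σ
  | t + 1 => FWLColor σ t × Multiset (FWLColor σ t × FWLColor σ t)

/-- The 2-FWL coloring: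
`c_Fᵗ⁺¹(p,q) = (c_Fᵗ(p,q), {{(c_Fᵗ(u,q), c_Fᵗ(p,u)) : u ∈ V}})`. -/
noncomputable def fwl2 {σ : Type u} {V : Type v} [Fintype V] (G : SimpleGraph V)
    (l : V → σ) : (t : ℕ) → V × V → FWLColor σ t
  | 0 => pairInit G l
  | t + 1 => fun e =>
      (fwl2 G l t e,
        Finset.univ.val.map (fun u => (fwl2 G l t (u, e.2), fwl2 G l t (e.1, u))))

/-- The local 2-FWL (2-FWL_L) coloring:
`c_FLᵗ⁺¹(p,q) = (c_FLᵗ(p,q), {{(c_FLᵗ(u,q), c_FLᵗ(p,u)) : (u,q) ∈ E or (p,u) ∈ E}})`. -/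
noncomputable def fwl2L {σ : Type u} {V : Type v} [Fintype V] (G : SimpleGraph V)
    (l : V → σ) : (t : ℕ) → V × V → FWLColor σ t
  | 0 => pairInit G l
  | t + 1 => fun e =>
      (fwl2L G l t e,
        (Finset.univ.filter (fun u => G.Adj u e.2 ∨ G.Adj e.1 u)).val.map
          (fun u => (fwl2L G l t (u, e.2), fwl2L G l t (e.1, u))))

/-- A target link: an ordered pair of distinct, non-adjacent vertices. -/
def IsTargetLink {V : Type v} (G : SimpleGraph V) (e : V × V) : Prop :=
  e.1 ≠ e.2 ∧ ¬ G.Adj e.1 e.2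

/-- `(p,q)` in `(G,l)` and `(p',q')` in `(G',l')` are 1-WL-indistinguishable. -/
noncomputable def WL1Indist {σ : Type u} {V V' : Type v} [Fintype V] [Fintype V']
    (G : SimpleGraph V) (l : V → σ) (G' : SimpleGraph V') (l' : V' → σ)
    (e : V × V) (e' : V' × V') : Prop :=
  ∀ t : ℕ, wl1 G l t e.1 = wl1 G' l' t e'.1 ∧ wl1 G l t e.2 = wl1 G' l' t e'.2

/-- 2-WL-indistinguishability. -/
noncomputable def WL2Indist {σ : Type u} {V V' : Type v} [Fintype V] [Fintype V']
    (G : SimpleGraph V) (l : V → σ) (G' : SimpleGraph V') (l' : V' → σ)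
    (e : V × V) (e' : V' × V') : Prop :=
  ∀ t : ℕ, wl2 G l t e = wl2 G' l' t e'

/-- Local 2-WL (2-WL_L) indistinguishability. -/
noncomputable def WL2LIndist {σ : Type u} {V V' : Type v} [Fintype V] [Fintype V']
    (G : SimpleGraph V) (l : V → σ) (G' : SimpleGraph V') (l' : V' → σ)
    (e : V × V) (e' : V' × V') : Prop :=
  ∀ t : ℕ, wl2L G l t e = wl2L G' l' t e'

/-- 2-FWL-indistinguishability. -/
noncomputable def FWL2Indist {σ : Type u} {V V' : Type v} [Fintype V] [Fintype V']
    (G : SimpleGraph V) (l : V → σ) (G' : SimpleGraph V') (l' : V' → σ)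
    (e : V × V) (e' : V' × V') : Prop :=
  ∀ t : ℕ, fwl2 G l t e = fwl2 G' l' t e'

/-- Local 2-FWL (2-FWL_L) indistinguishability. -/
noncomputable def FWL2LIndist {σ : Type u} {V V' : Type v} [Fintype V] [Fintype V']
    (G : SimpleGraph V) (l : V → σ) (G' : SimpleGraph V') (l' : V' → σ)
    (e : V × V) (e' : V' × V') : Prop :=
  ∀ t : ℕ, fwl2L G l t e = fwl2L G' l' t e'

/-- The 0/1 labeling trick: augment the labeling with indicator of membership in `{p, q}`. -/
noncomputable def label01 {σ : Type u} {V : Type v} (l : V → σ) (e : V × V) :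
    V → σ × Bool :=
  fun v => (l v, decide (v = e.1 ∨ v = e.2))

/-- 1-WL-with-0/1-labeling indistinguishability of target links. -/
noncomputable def WL1LabelIndist {σ : Type u} {V V' : Type v} [Fintype V] [Fintype V']
    (G : SimpleGraph V) (l : V → σ) (G' : SimpleGraph V') (l' : V' → σ)
    (e : V × V) (e' : V' × V') : Prop :=
  WL1Indist G (label01 l e) G' (label01 l' e') e e'

/-- The number of common neighbors of `p` and `q` in `G`. -/
noncomputable def commonNbrCount {V : Type v} [Fintype V] (G : SimpleGraph V)
    (e : V × V) : ℕ :=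
  (G.neighborFinset e.1 ∩ G.neighborFinset e.2).card

/-- Under constant labels, all target links have the same initial pair color. -/
theorem IsTargetLink.pairInit_eq {σ : Type u} {V V' : Type v} {G : SimpleGraph V}
    {G' : SimpleGraph V'} {e : V × V} {e' : V' × V'} (h : IsTargetLink G e)
    (h' : IsTargetLink G' e') (c : σ) :
    pairInit G (fun _ => c) e = pairInit G' (fun _ => c) e' := by
  simp only [pairInit, h.1, h.2, h'.1, h'.2, decide_false]
  rfl

theorem Multiset.map_univ_eq_of_equiv {α β γ : Type*} [Fintype α] [Fintype β] {f : α → γ}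
    {g : β → γ} (σ : α ≃ β) (h : ∀ a, f a = g (σ a)) :
    Finset.univ.val.map f = Finset.univ.val.map g := by
  rw [← Multiset.map_univ_val_equiv σ, Multiset.map_map]
  exact Multiset.map_congr rfl fun a _ => h a

/-- On a graph with constant labels whose adjacency is invariant under right translations of an
additive group structure on the vertices, 2-WL never refines the initial pair coloring. -/
theorem wl2_eq_of_pairInit_eq {σ : Type u} {V : Type v} [Fintype V] [AddGroup V]
    (G : SimpleGraph V) (hG : ∀ a x y, G.Adj (x + a) (y + a) ↔ G.Adj x y) (c : σ)
    (t : ℕ) {e e' : V × V}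
    (h : pairInit G (fun _ => c) e = pairInit G (fun _ => c) e') :
    wl2 G (fun _ => c) t e = wl2 G (fun _ => c) t e' := by
  have htrans : ∀ a x y, pairInit G (fun _ => c) (x, y) =
      pairInit G (fun _ => c) (x + a, y + a) := by
    intro a x y
    simp only [pairInit, hG, add_left_inj]
    rfl
  induction t generalizing e e' with
  | zero => exact h
  | succ t ih =>
    refine Prod.ext (ih h) (Prod.ext ?_ ?_)
    · refine Multiset.map_univ_eq_of_equiv (Equiv.addRight (-e.2 + e'.2)) fun u => ?_
      refine ih ((htrans (-e.2 + e'.2) _ _).trans ?_)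
      simp [add_assoc]
    · refine Multiset.map_univ_eq_of_equiv (Equiv.addRight (-e.1 + e'.1)) fun u => ?_
      refine ih ((htrans (-e.1 + e'.1) _ _).trans ?_)
      simp [add_assoc]

/-- On edgeless graphs with constant labels, local 2-FWL never refines the initial pair
coloring. -/
theorem fwl2L_bot_eq_of_pairInit_eq {σ : Type u} {V V' : Type v} [Fintype V] [Fintype V']
    (c : σ) (t : ℕ) {e : V × V} {e' : V' × V'}
    (h : pairInit (⊥ : SimpleGraph V) (fun _ => c) e =
      pairInit (⊥ : SimpleGraph V') (fun _ => c) e') :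
    fwl2L (⊥ : SimpleGraph V) (fun _ => c) t e =
      fwl2L (⊥ : SimpleGraph V') (fun _ => c) t e' := by
  induction t with
  | zero => exact h
  | succ t ih =>
    simp only [fwl2L, ih, SimpleGraph.bot_adj, or_self, Finset.filter_false, Finset.empty_val,
      Multiset.map_zero]
    rfl

/-- 2-WL-indistinguishable pairs live in graphs of the same order. -/
theorem WL2Indist.card_eq {σ : Type u} {V V' : Type v} [Fintype V] [Fintype V']
    {G : SimpleGraph V} {l : V → σ} {G' : SimpleGraph V'} {l' : V' → σ}
    {e : V × V} {e' : V' × V'} (h : WL2Indist G l G' l' e e') :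
    Fintype.card V = Fintype.card V' := by
  have h1 := congrArg (fun x => Multiset.card x.2.1) (h 1)
  exact (Multiset.card_map _ _).symm.trans (h1.trans (Multiset.card_map _ _))

/-- Local 2-FWL-indistinguishable pairs have neighborhood unions of the same size. -/
theorem FWL2LIndist.card_filter_adj_eq {σ : Type u} {V V' : Type v} [Fintype V] [Fintype V']
    {G : SimpleGraph V} {l : V → σ} {G' : SimpleGraph V'} {l' : V' → σ}
    {e : V × V} {e' : V' × V'} [DecidableRel G.Adj] [DecidableRel G'.Adj]
    (h : FWL2LIndist G l G' l' e e') :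
    (Finset.univ.filter (fun u => G.Adj u e.2 ∨ G.Adj e.1 u)).card =
      (Finset.univ.filter (fun u => G'.Adj u e'.2 ∨ G'.Adj e'.1 u)).card := by
  have h1 := congrArg (fun x => Multiset.card x.2) (h 1)
  have h2 := (Multiset.card_map _ _).symm.trans (h1.trans (Multiset.card_map _ _))
  simp only [Finset.card_val] at h2
  convert h2

/-- Table 1 entry: 2-WL and local 2-FWL are incomparable in link discriminating power. -/
theorem wl2_incomparable_local_fwl2 :
    (∃ (n n' : ℕ) (G : SimpleGraph (Fin n)) (G' : SimpleGraph (Fin n'))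
        (e : Fin n × Fin n) (e' : Fin n' × Fin n'),
        IsTargetLink G e ∧ IsTargetLink G' e' ∧
        FWL2LIndist G (fun _ => ()) G' (fun _ => ()) e e' ∧
        ¬ WL2Indist G (fun _ => ()) G' (fun _ => ()) e e') ∧
    (∃ (m m' : ℕ) (H : SimpleGraph (Fin m)) (H' : SimpleGraph (Fin m'))
        (f : Fin m × Fin m) (f' : Fin m' × Fin m'),
        IsTargetLink H f ∧ IsTargetLink H' f' ∧
        WL2Indist H (fun _ => ()) H' (fun _ => ()) f f' ∧
        ¬ FWL2LIndist H (fun _ => ()) H' (fun _ => ()) f f') := by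
  have hbot (n : ℕ) : IsTargetLink (⊥ : SimpleGraph (Fin (n + 2))) (0, 1) := by
    simp [IsTargetLink]
  have hcycle₂ : IsTargetLink (SimpleGraph.cycleGraph 6) (0, 2) := ⟨by decide, by decide⟩
  have hcycle₃ : IsTargetLink (SimpleGraph.cycleGraph 6) (0, 3) := ⟨by decide, by decide⟩
  refine ⟨⟨2, 3, ⊥, ⊥, (0, 1), (0, 1), hbot 0, hbot 1,
    fun t => fwl2L_bot_eq_of_pairInit_eq () t ((hbot 0).pairInit_eq (hbot 1) ()),
    fun h => by simpa using h.card_eq⟩,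
    ⟨6, 6, SimpleGraph.cycleGraph 6, SimpleGraph.cycleGraph 6, (0, 2), (0, 3), hcycle₂, hcycle₃,
      fun t => wl2_eq_of_pairInit_eq _ (fun a x y => ?_) () t (hcycle₂.pairInit_eq hcycle₃ ()),
      fun h => absurd h.card_filter_adj_eq (by decide)⟩⟩
  simp [SimpleGraph.cycleGraph_adj]
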